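/- Let ℓ ≥ 1, d ≥ 1, ν ≥ 1, 0 < s < 1, 1 ≤ p < ∞ and R > 0. There exist constants c₁ > 0 and c₂ > 0, depending only on ℓ, d, s, p and R, with the following property: for every measurable u : B^ℓ → ℝ^ν with |u| ≤ R almost everywhere, setting Q = B^ℓ × (0,1)^d ⊆ ℝ^{ℓ+d} and f(y, z) = u(y) for (y, z) ∈ Q, one has c₁ · ∬_{B^ℓ×B^ℓ} |u(y) − u(x)|^p / |y − x|^{ℓ+sp} dy dx ≤ ∬_{Q×Q} |f(Y) − f(X)|^p / |Y − X|^{ℓ+d+sp} dY dX ≤ c₂ · ( ∬_{B^ℓ×B^ℓ} |u(y) − u(x)|^p / |y − x|^{ℓ+sp} dy dx + 1 ). -/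

import Mathlib

open Metric Set MeasureTheory
open scoped ENNReal

noncomputable section

/-- The Gagliardo energy `E^{s,p}` on a set `A ⊆ ℝ^ℓ`. -/
def gagliardoE {l ν : ℕ} (s p : ℝ) (A : Set (EuclideanSpace ℝ (Fin l)))
    (u : EuclideanSpace ℝ (Fin l) → EuclideanSpace ℝ (Fin ν)) : ℝ≥0∞ :=
  ∫⁻ x in A, ∫⁻ y in A, ENNReal.ofReal (‖u y - u x‖ ^ p / ‖y - x‖ ^ ((l : ℝ) + s * p))

/-!
By Tonelli, the energy on the cylinder `A × C` is the double integral over `A × A` of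
`|u y - u x| ^ p` against the kernel `k (|y - x|)`, where `k r` is the integral over
`z, w ∈ C` of `(r ^ 2 + |w - z| ^ 2) ^ (-(b + d) / 2)` and `d` is the dimension of `C`. It remains
to see that `k r` is comparable to `r ^ (-b)` for `0 < r ≤ L`. From above, enlarge `C` to the whole
space and substitute `w = z + r v`. From below, only the `w ∈ C` with `|w - z| ≤ r` are needed: as
`C` is convex and bounded, it contains a homothetic copy of itself of ratio `r / D` centred at `z`
and lying in the ball of radius `r`, so these `w` have measure at least a multiple of `r ^ d`.
-/

section Scaling

variable {F : Type*} [NormedAddCommGroup F] [NormedSpace ℝ F] [FiniteDimensional ℝ F]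
  [MeasurableSpace F] [BorelSpace F] (μ : Measure F) [μ.IsAddHaarMeasure]

lemma lintegral_comp_smul_addHaar (f : F → ℝ≥0∞) {c : ℝ} (hc : c ≠ 0) :
    ∫⁻ v, f (c • v) ∂μ = ENNReal.ofReal |(c ^ Module.finrank ℝ F)⁻¹| * ∫⁻ v, f v ∂μ := by
  rw [← smul_eq_mul, ← lintegral_smul_measure, ← Measure.map_addHaar_smul μ hc]
  exact (lintegral_map_equiv f (MeasurableEquiv.smul₀ c hc)).symm

lemma lintegral_inv_sqrt_one_add_norm_sq_rpow_lt_top {a : ℝ} (ha : Module.finrank ℝ F < a) :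
    ∫⁻ v, ENNReal.ofReal (√(1 + ‖v‖ ^ 2) ^ a)⁻¹ ∂μ < ∞ := by
  convert (integrable_rpow_neg_one_add_norm_sq (μ := μ) ha).lintegral_lt_top using 4 with v
  have hpos : 0 ≤ 1 + ‖v‖ ^ 2 := by positivity
  rw [Real.sqrt_eq_rpow, ← Real.rpow_mul hpos, ← Real.rpow_neg hpos]
  ring_nf

lemma lintegral_inv_sqrt_sq_add_norm_sq_rpow (b : ℝ) {r : ℝ} (hr : 0 < r) :
    ∫⁻ v, ENNReal.ofReal (√(r ^ 2 + ‖v‖ ^ 2) ^ (b + Module.finrank ℝ F))⁻¹ ∂μ =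
      (∫⁻ v, ENNReal.ofReal (√(1 + ‖v‖ ^ 2) ^ (b + Module.finrank ℝ F))⁻¹ ∂μ) *
        ENNReal.ofReal (r ^ b)⁻¹ := by
  set a := b + Module.finrank ℝ F with ha
  have sqrt_scale (v : F) : √(r ^ 2 + ‖v‖ ^ 2) = r * √(1 + ‖r⁻¹ • v‖ ^ 2) := by
    rw [← Real.sqrt_sq hr.le, ← Real.sqrt_mul (sq_nonneg r), Real.sqrt_sq hr.le, norm_smul,
      Real.norm_of_nonneg (inv_nonneg.2 hr.le)]
    field_simp
  have kernel_scale (v : F) : ENNReal.ofReal (√(r ^ 2 + ‖v‖ ^ 2) ^ a)⁻¹ =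
      ENNReal.ofReal (r ^ a)⁻¹ * ENNReal.ofReal (√(1 + ‖r⁻¹ • v‖ ^ 2) ^ a)⁻¹ := by
    rw [sqrt_scale, Real.mul_rpow hr.le (Real.sqrt_nonneg _), mul_inv,
      ENNReal.ofReal_mul (by positivity)]
  have const_scale : (r ^ a)⁻¹ * |(r⁻¹ ^ Module.finrank ℝ F)⁻¹| = (r ^ b)⁻¹ := by
    rw [inv_pow, inv_inv, abs_of_pos (by positivity), ha, Real.rpow_add_natCast hr.ne']
    field_simp
  simp only [kernel_scale]
  rw [lintegral_const_mul' _ _ ENNReal.ofReal_ne_top,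
    lintegral_comp_smul_addHaar μ (fun v ↦ ENNReal.ofReal (√(1 + ‖v‖ ^ 2) ^ a)⁻¹)
      (inv_ne_zero hr.ne'),
    ← mul_assoc, ← ENNReal.ofReal_mul (by positivity), const_scale, mul_comm]

lemma ofReal_pow_mul_measure_le_measure_inter_closedBall {C : Set F} (hC : Convex ℝ C) {z : F}
    (hz : z ∈ C) {r D : ℝ} (hr : 0 ≤ r) (hrD : r ≤ D) (hCD : C ⊆ closedBall z D) :
    ENNReal.ofReal ((r / D) ^ Module.finrank ℝ F) * μ C ≤ μ (C ∩ closedBall z r) := by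
  have hD : 0 ≤ D := hr.trans hrD
  have ht : r / D ∈ Icc (0 : ℝ) 1 := ⟨div_nonneg hr hD, div_le_one_of_le₀ hrD hD⟩
  have homothety_subset : AffineMap.homothety z (r / D) '' C ⊆ C ∩ closedBall z r := by
    rintro _ ⟨w, hw, rfl⟩
    refine ⟨hC.lineMap_mem hz hw ht, ?_⟩
    rw [mem_closedBall, dist_homothety_center, Real.norm_of_nonneg ht.1]
    calc r / D * dist z w ≤ r / D * D := by
          gcongr
          exact (dist_comm z w).trans_le (hCD hw)
      _ ≤ r := mul_le_of_le_div₀ hr hD le_rfl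
  calc ENNReal.ofReal ((r / D) ^ Module.finrank ℝ F) * μ C
      = μ (AffineMap.homothety z (r / D) '' C) := by
        rw [Measure.addHaar_image_homothety, abs_of_nonneg (pow_nonneg ht.1 _)]
    _ ≤ μ (C ∩ closedBall z r) := measure_mono homothety_subset

end Scaling

section FibreKernel

variable {F : Type*} [NormedAddCommGroup F] [MeasurableSpace F]

/-- The kernel `|Y - X| ^ (-a)` of a cylinder with cross-section `C`, integrated over the fibres
of `X` and `Y`, as a function of the distance `r` of the base points of these fibres. -/
def fibreKernel (μ : Measure F) (a : ℝ) (C : Set F) (r : ℝ) : ℝ≥0∞ :=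
  ∫⁻ z in C, ∫⁻ w in C, ENNReal.ofReal (√(r ^ 2 + ‖w - z‖ ^ 2) ^ a)⁻¹ ∂μ ∂μ

variable [NormedSpace ℝ F] [FiniteDimensional ℝ F] [BorelSpace F]
  (μ : Measure F) [μ.IsAddHaarMeasure]

lemma setLIntegral_inv_sqrt_sq_add_norm_sub_sq_rpow_le (C : Set F) (z : F) (b : ℝ) {r : ℝ}
    (hr : 0 < r) :
    ∫⁻ w in C, ENNReal.ofReal (√(r ^ 2 + ‖w - z‖ ^ 2) ^ (b + Module.finrank ℝ F))⁻¹ ∂μ ≤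
      (∫⁻ v, ENNReal.ofReal (√(1 + ‖v‖ ^ 2) ^ (b + Module.finrank ℝ F))⁻¹ ∂μ) *
        ENNReal.ofReal (r ^ b)⁻¹ := by
  rw [← lintegral_inv_sqrt_sq_add_norm_sq_rpow μ b hr, ← lintegral_sub_right_eq_self (μ := μ) _ z]
  exact setLIntegral_le_lintegral _ _

lemma fibreKernel_le (C : Set F) (b : ℝ) {r : ℝ} (hr : 0 < r) :
    fibreKernel μ (b + Module.finrank ℝ F) C r ≤
      (∫⁻ v, ENNReal.ofReal (√(1 + ‖v‖ ^ 2) ^ (b + Module.finrank ℝ F))⁻¹ ∂μ) * μ C *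
        ENNReal.ofReal (r ^ b)⁻¹ :=
  (lintegral_mono fun z ↦ setLIntegral_inv_sqrt_sq_add_norm_sub_sq_rpow_le μ C z b hr).trans_eq
    (by rw [setLIntegral_const, mul_right_comm])

lemma le_setLIntegral_inv_sqrt_sq_add_norm_sub_sq_rpow {C : Set F} (hCm : MeasurableSet C)
    (hC : Convex ℝ C) {z : F} (hz : z ∈ C) {b r D : ℝ} (hb : 0 ≤ b) (hr : 0 < r) (hrD : r ≤ D)
    (hCD : C ⊆ closedBall z D) :
    ENNReal.ofReal (D ^ Module.finrank ℝ F * √2 ^ (b + Module.finrank ℝ F))⁻¹ * μ C *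
        ENNReal.ofReal (r ^ b)⁻¹ ≤
      ∫⁻ w in C, ENNReal.ofReal (√(r ^ 2 + ‖w - z‖ ^ 2) ^ (b + Module.finrank ℝ F))⁻¹ ∂μ := by
  set n := Module.finrank ℝ F
  have hD : 0 < D := hr.trans_le hrD
  have kernel_ge {w : F} (hw : w ∈ C ∩ closedBall z r) :
      ENNReal.ofReal ((√2 * r) ^ (b + n))⁻¹ ≤
        ENNReal.ofReal (√(r ^ 2 + ‖w - z‖ ^ 2) ^ (b + n))⁻¹ := by
    have hwz : ‖w - z‖ ≤ r := mem_closedBall_iff_norm.1 hw.2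
    have sqrt_le : √(r ^ 2 + ‖w - z‖ ^ 2) ≤ √2 * r := by
      rw [← Real.sqrt_sq hr.le, ← Real.sqrt_mul zero_le_two, Real.sqrt_sq hr.le, two_mul]
      gcongr
    gcongr
  have const_eq : (D ^ n * √2 ^ (b + n))⁻¹ * (r ^ b)⁻¹ =
      ((√2 * r) ^ (b + n))⁻¹ * (r / D) ^ n := by
    rw [Real.mul_rpow (Real.sqrt_nonneg 2) hr.le, Real.rpow_add_natCast hr.ne', div_pow]
    field_simp
  calc ENNReal.ofReal (D ^ n * √2 ^ (b + n))⁻¹ * μ C * ENNReal.ofReal (r ^ b)⁻¹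
      = ENNReal.ofReal ((√2 * r) ^ (b + n))⁻¹ * (ENNReal.ofReal ((r / D) ^ n) * μ C) := by
        rw [mul_right_comm, ← ENNReal.ofReal_mul (by positivity), const_eq,
          ENNReal.ofReal_mul (by positivity), mul_assoc]
    _ ≤ ENNReal.ofReal ((√2 * r) ^ (b + n))⁻¹ * μ (C ∩ closedBall z r) := by
        gcongr
        exact ofReal_pow_mul_measure_le_measure_inter_closedBall μ hC hz hr.le hrD hCD
    _ ≤ ∫⁻ w in C ∩ closedBall z r, ENNReal.ofReal (√(r ^ 2 + ‖w - z‖ ^ 2) ^ (b + n))⁻¹ ∂μ := by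
        rw [← setLIntegral_const]
        exact setLIntegral_mono' (hCm.inter measurableSet_closedBall) fun w hw ↦ kernel_ge hw
    _ ≤ _ := lintegral_mono_set inter_subset_left

lemma le_fibreKernel {C : Set F} (hCm : MeasurableSet C) (hC : Convex ℝ C) {b r D : ℝ}
    (hb : 0 ≤ b) (hr : 0 < r) (hrD : r ≤ D) (hCD : ∀ z ∈ C, C ⊆ closedBall z D) :
    ENNReal.ofReal (D ^ Module.finrank ℝ F * √2 ^ (b + Module.finrank ℝ F))⁻¹ * μ C * μ C *
        ENNReal.ofReal (r ^ b)⁻¹ ≤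
      fibreKernel μ (b + Module.finrank ℝ F) C r := by
  rw [mul_right_comm, ← setLIntegral_const]
  exact setLIntegral_mono' hCm fun z hz ↦
    le_setLIntegral_inv_sqrt_sq_add_norm_sub_sq_rpow μ hCm hC hz hb hr hrD (hCD z hz)

lemma exists_fibreKernel_bounds {C : Set F} (hCm : MeasurableSet C) (hC : Convex ℝ C)
    (hCb : Bornology.IsBounded C) (hC₀ : μ C ≠ 0) {b : ℝ} (hb : 0 < b) (L : ℝ) :
    ∃ c₁ c₂ : ℝ, 0 < c₁ ∧ 0 < c₂ ∧ ∀ r, 0 < r → r ≤ L →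
      ENNReal.ofReal c₁ * ENNReal.ofReal (r ^ b)⁻¹ ≤ fibreKernel μ (b + Module.finrank ℝ F) C r ∧
      fibreKernel μ (b + Module.finrank ℝ F) C r ≤
        ENNReal.ofReal c₂ * ENNReal.ofReal (r ^ b)⁻¹ := by
  set D := max (max L (diam C)) 1
  have hCD : ∀ z ∈ C, C ⊆ closedBall z D := fun z hz w hw ↦
    (dist_le_diam_of_mem hCb hw hz).trans ((le_max_right _ _).trans (le_max_left _ _))
  have const_pos : 0 < (D ^ Module.finrank ℝ F * √2 ^ (b + Module.finrank ℝ F))⁻¹ := by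
    positivity
  have lower_pos : 0 < ENNReal.ofReal
      (D ^ Module.finrank ℝ F * √2 ^ (b + Module.finrank ℝ F))⁻¹ * μ C * μ C :=
    ENNReal.mul_pos (ENNReal.mul_pos (ENNReal.ofReal_pos.2 const_pos).ne' hC₀).ne' hC₀
  have upper_lt_top : (∫⁻ v, ENNReal.ofReal (√(1 + ‖v‖ ^ 2) ^ (b + Module.finrank ℝ F))⁻¹ ∂μ) *
      μ C < ∞ :=
    ENNReal.mul_lt_top (lintegral_inv_sqrt_one_add_norm_sq_rpow_lt_top μ (by linarith))
      hCb.measure_lt_top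
  obtain ⟨c₁, -, hc₁, hc₁_le⟩ := ENNReal.lt_iff_exists_real_btwn.1 lower_pos
  obtain ⟨c₂, -, le_hc₂, -⟩ := ENNReal.lt_iff_exists_real_btwn.1 upper_lt_top
  refine ⟨c₁, c₂, ENNReal.ofReal_pos.1 hc₁, ENNReal.ofReal_pos.1 (pos_of_gt le_hc₂),
    fun r hr hrL ↦ ⟨?_, ?_⟩⟩
  · have hrD : r ≤ D := hrL.trans ((le_max_left _ _).trans (le_max_left _ _))
    exact (mul_le_mul_left hc₁_le.le _).trans (le_fibreKernel μ hCm hC hb.le hr hrD hCD)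
  · exact (fibreKernel_le μ C b hr).trans (mul_le_mul_left le_hc₂.le _)

end FibreKernel

section Energies

variable {E F G : Type*} [NormedAddCommGroup E] [MeasurableSpace E]
  [NormedAddCommGroup F] [MeasurableSpace F] [NormedAddCommGroup G]

/-- The Gagliardo energy on `A ⊆ E` with integrability exponent `p` and kernel exponent `b`, for
an arbitrary measure on a normed group; `gagliardoE s p` is the case `b = ℓ + s p` of Lebesgue
measure on `ℝ^ℓ`. -/
def gagliardoEnergy (μ : Measure E) (p b : ℝ) (A : Set E) (u : E → G) : ℝ≥0∞ :=
  ∫⁻ x in A, ∫⁻ y in A, ENNReal.ofReal (‖u y - u x‖ ^ p / ‖y - x‖ ^ b) ∂μ ∂μ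

/-- The Gagliardo energy on the cylinder `A × C` of the map `(y, z) ↦ u y`. The distance of
`Y` and `X` is written out because the norm of `E × F` is the maximum norm. -/
def cylinderEnergy (μ : Measure E) (ν : Measure F) (p a : ℝ) (A : Set E) (C : Set F)
    (u : E → G) : ℝ≥0∞ :=
  ∫⁻ X in A ×ˢ C, ∫⁻ Y in A ×ˢ C, ENNReal.ofReal (‖u Y.1 - u X.1‖ ^ p /
    √(‖Y.1 - X.1‖ ^ 2 + ‖Y.2 - X.2‖ ^ 2) ^ a) ∂μ.prod ν ∂μ.prod ν

variable [BorelSpace E] [SecondCountableTopology E] [BorelSpace F]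
  [MeasurableSpace G] [BorelSpace G] [SecondCountableTopology G]

lemma cylinderEnergy_eq_lintegral_fibreKernel [SecondCountableTopology F]
    (μ : Measure E) [SFinite μ] (ν : Measure F) [SFinite ν]
    (p a : ℝ) (A : Set E) (C : Set F) {u : E → G} (hu : Measurable u) :
    cylinderEnergy μ ν p a A C u =
      ∫⁻ x in A, ∫⁻ y in A,
        ENNReal.ofReal (‖u y - u x‖ ^ p) * fibreKernel ν a C ‖y - x‖ ∂μ ∂μ := by
  let k (x : E) (z : F) (y : E) (w : F) : ℝ≥0∞ :=
    ENNReal.ofReal (√(‖y - x‖ ^ 2 + ‖w - z‖ ^ 2) ^ a)⁻¹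
  let N (x y : E) : ℝ≥0∞ := ENNReal.ofReal (‖u y - u x‖ ^ p)
  let I (x : E) (z : F) (y : E) : ℝ≥0∞ := ∫⁻ w in C, k x z y w ∂ν
  have hI : Measurable fun q : (E × F) × E ↦ N q.1.1 q.2 * I q.1.1 q.1.2 q.2 := by
    have hk : Measurable fun q : ((E × F) × E) × F ↦ k q.1.1.1 q.1.1.2 q.1.2 q.2 := by fun_prop
    have hN : Measurable fun q : (E × F) × E ↦ N q.1.1 q.2 := by fun_prop
    exact hN.mul hk.lintegral_prod_right'
  have inner (X : E × F) :
      ∫⁻ Y in A ×ˢ C, ENNReal.ofReal (‖u Y.1 - u X.1‖ ^ p /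
        √(‖Y.1 - X.1‖ ^ 2 + ‖Y.2 - X.2‖ ^ 2) ^ a) ∂μ.prod ν =
      ∫⁻ y in A, N X.1 y * I X.1 X.2 y ∂μ := by
    rw [setLIntegral_prod _ (Measurable.aemeasurable (by fun_prop))]
    refine lintegral_congr fun y ↦ ?_
    rw [← lintegral_const_mul' _ _ ENNReal.ofReal_ne_top]
    refine lintegral_congr fun w ↦ ?_
    rw [div_eq_mul_inv, ENNReal.ofReal_mul (by positivity)]
  calc cylinderEnergy μ ν p a A C u
      = ∫⁻ X in A ×ˢ C, ∫⁻ y in A, N X.1 y * I X.1 X.2 y ∂μ ∂μ.prod ν := lintegral_congr inner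
    _ = ∫⁻ x in A, ∫⁻ z in C, ∫⁻ y in A, N x y * I x z y ∂μ ∂ν ∂μ :=
        setLIntegral_prod _ hI.lintegral_prod_right'.aemeasurable
    _ = ∫⁻ x in A, ∫⁻ y in A, ∫⁻ z in C, N x y * I x z y ∂ν ∂μ ∂μ :=
        lintegral_congr fun x ↦ lintegral_lintegral_swap
          (hI.comp (measurable_prodMk_left.prodMap measurable_id)).aemeasurable
    _ = _ := lintegral_congr fun x ↦ lintegral_congr fun y ↦
        lintegral_const_mul' _ _ ENNReal.ofReal_ne_top

theorem statement12_general [NormedSpace ℝ F] [FiniteDimensional ℝ F]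
    (μ : Measure E) [SFinite μ] (ν : Measure F) [ν.IsAddHaarMeasure]
    {A : Set E} (hAm : MeasurableSet A) (hAb : Bornology.IsBounded A)
    {C : Set F} (hCm : MeasurableSet C) (hC : Convex ℝ C) (hCb : Bornology.IsBounded C)
    (hC₀ : ν C ≠ 0) {p a b : ℝ} (hp : 0 < p) (hb : 0 < b) (hab : a = b + Module.finrank ℝ F) :
    ∃ c₁ c₂ : ℝ, 0 < c₁ ∧ 0 < c₂ ∧ ∀ u : E → G, Measurable u →
      ENNReal.ofReal c₁ * gagliardoEnergy μ p b A u ≤ cylinderEnergy μ ν p a A C u ∧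
      cylinderEnergy μ ν p a A C u ≤ ENNReal.ofReal c₂ * gagliardoEnergy μ p b A u := by
  subst hab
  obtain ⟨c₁, c₂, hc₁, hc₂, hk⟩ := exists_fibreKernel_bounds ν hCm hC hCb hC₀ hb (diam A)
  refine ⟨c₁, c₂, hc₁, hc₂, fun u hu ↦ ?_⟩
  have energy_eq (c : ℝ) : ENNReal.ofReal c * gagliardoEnergy μ p b A u =
      ∫⁻ x in A, ∫⁻ y in A, ENNReal.ofReal (‖u y - u x‖ ^ p) *
        (ENNReal.ofReal c * ENNReal.ofReal (‖y - x‖ ^ b)⁻¹) ∂μ ∂μ := by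
    simp only [gagliardoEnergy, ← lintegral_const_mul' _ _ ENNReal.ofReal_ne_top]
    refine lintegral_congr fun x ↦ lintegral_congr fun y ↦ ?_
    rw [div_eq_mul_inv, ENNReal.ofReal_mul (by positivity), mul_left_comm]
  have kernel_bounds {x y : E} (hx : x ∈ A) (hy : y ∈ A) :
      ENNReal.ofReal (‖u y - u x‖ ^ p) *
          (ENNReal.ofReal c₁ * ENNReal.ofReal (‖y - x‖ ^ b)⁻¹) ≤
        ENNReal.ofReal (‖u y - u x‖ ^ p) *
          fibreKernel ν (b + Module.finrank ℝ F) C ‖y - x‖ ∧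
      ENNReal.ofReal (‖u y - u x‖ ^ p) * fibreKernel ν (b + Module.finrank ℝ F) C ‖y - x‖ ≤
        ENNReal.ofReal (‖u y - u x‖ ^ p) *
          (ENNReal.ofReal c₂ * ENNReal.ofReal (‖y - x‖ ^ b)⁻¹) := by
    obtain rfl | hyx := eq_or_ne y x
    · simp [Real.zero_rpow hp.ne']
    · have dist_le : ‖y - x‖ ≤ diam A := dist_eq_norm y x ▸ dist_le_diam_of_mem hAb hy hx
      obtain ⟨lower, upper⟩ := hk ‖y - x‖ (norm_sub_pos_iff.2 hyx) dist_le
      exact ⟨mul_le_mul_right lower _, mul_le_mul_right upper _⟩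
  rw [cylinderEnergy_eq_lintegral_fibreKernel μ ν p _ A C hu, energy_eq, energy_eq]
  exact ⟨setLIntegral_mono' hAm fun x hx ↦ setLIntegral_mono' hAm fun y hy ↦
      (kernel_bounds hx hy).1,
    setLIntegral_mono' hAm fun x hx ↦ setLIntegral_mono' hAm fun y hy ↦ (kernel_bounds hx hy).2⟩

end Energies

section Box

variable {ι : Type*} {S : ι → Set ℝ}

lemma isOpen_setOf_forall_apply_mem [Finite ι] (hS : ∀ i, IsOpen (S i)) :
    IsOpen {z : EuclideanSpace ℝ ι | ∀ i, z i ∈ S i} := by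
  simp only [ofPred_forall]
  exact isOpen_iInter_of_finite fun i ↦ (hS i).preimage (EuclideanSpace.proj i).continuous

lemma convex_setOf_forall_apply_mem (hS : ∀ i, Convex ℝ (S i)) :
    Convex ℝ {z : EuclideanSpace ℝ ι | ∀ i, z i ∈ S i} := by
  simp only [ofPred_forall]
  exact convex_iInter fun i ↦ (hS i).linear_preimage (EuclideanSpace.proj i).toLinearMap

lemma isBounded_setOf_forall_apply_mem [Finite ι] (hS : ∀ i, Bornology.IsBounded (S i)) :
    Bornology.IsBounded {z : EuclideanSpace ℝ ι | ∀ i, z i ∈ S i} := by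
  cases nonempty_fintype ι
  exact ((PiLp.antilipschitzWith_ofLp 2 _).isBounded_preimage (Bornology.IsBounded.pi hS)).subset
    fun _ hz i _ ↦ hz i

lemma volume_setOf_forall_apply_mem_ne_zero [Fintype ι] (hS : ∀ i, IsOpen (S i))
    (hne : ∀ i, (S i).Nonempty) : volume {z : EuclideanSpace ℝ ι | ∀ i, z i ∈ S i} ≠ 0 := by
  choose x hx using hne
  exact (isOpen_setOf_forall_apply_mem hS).measure_ne_zero volume ⟨WithLp.toLp 2 x, hx⟩

end Box

/-- the Gagliardo energy on `Q = B^ℓ × (0,1)^d` (with the Euclidean distance of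
`ℝ^{ℓ+d}` in the kernel) of the cylindrical extension `f(y,z) = u(y)` of a bounded measurable
map `u` is comparable to `E^{s,p}_{B^ℓ}(u)`, up to an additive constant. -/
theorem statement12 (l d ν : ℕ) (hl : 1 ≤ l) (hd : 1 ≤ d) (hν : 1 ≤ ν)
    (s p : ℝ) (hs0 : 0 < s) (hs1 : s < 1) (hp : 1 ≤ p) (R : ℝ) (hR : 0 < R) :
    ∃ c₁ c₂ : ℝ, 0 < c₁ ∧ 0 < c₂ ∧
      ∀ u : EuclideanSpace ℝ (Fin l) → EuclideanSpace ℝ (Fin ν),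
        Measurable u →
        (∀ᵐ x ∂(volume.restrict (ball (0 : EuclideanSpace ℝ (Fin l)) 1)), ‖u x‖ ≤ R) →
        (ENNReal.ofReal c₁ * gagliardoE s p (ball 0 1) u
          ≤ ∫⁻ X in (ball (0 : EuclideanSpace ℝ (Fin l)) 1 ×ˢ
                {z : EuclideanSpace ℝ (Fin d) | ∀ i, z i ∈ Ioo (0 : ℝ) 1}),
              ∫⁻ Y in (ball (0 : EuclideanSpace ℝ (Fin l)) 1 ×ˢ
                {z : EuclideanSpace ℝ (Fin d) | ∀ i, z i ∈ Ioo (0 : ℝ) 1}),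
                ENNReal.ofReal (‖u Y.1 - u X.1‖ ^ p /
                  Real.sqrt (‖Y.1 - X.1‖ ^ 2 + ‖Y.2 - X.2‖ ^ 2) ^ ((l : ℝ) + d + s * p))) ∧
        ((∫⁻ X in (ball (0 : EuclideanSpace ℝ (Fin l)) 1 ×ˢ
                {z : EuclideanSpace ℝ (Fin d) | ∀ i, z i ∈ Ioo (0 : ℝ) 1}),
              ∫⁻ Y in (ball (0 : EuclideanSpace ℝ (Fin l)) 1 ×ˢ
                {z : EuclideanSpace ℝ (Fin d) | ∀ i, z i ∈ Ioo (0 : ℝ) 1}),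
                ENNReal.ofReal (‖u Y.1 - u X.1‖ ^ p /
                  Real.sqrt (‖Y.1 - X.1‖ ^ 2 + ‖Y.2 - X.2‖ ^ 2) ^ ((l : ℝ) + d + s * p)))
          ≤ ENNReal.ofReal c₂ * (gagliardoE s p (ball 0 1) u + 1)) := by
  obtain ⟨c₁, c₂, hc₁, hc₂, hE⟩ := statement12_general (G := EuclideanSpace ℝ (Fin ν))
    (p := p) (a := l + d + s * p) (b := l + s * p)
    (volume : Measure (EuclideanSpace ℝ (Fin l))) (volume : Measure (EuclideanSpace ℝ (Fin d)))
    measurableSet_ball isBounded_ball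
    (isOpen_setOf_forall_apply_mem fun _ ↦ isOpen_Ioo).measurableSet
    (convex_setOf_forall_apply_mem fun _ ↦ convex_Ioo 0 1)
    (isBounded_setOf_forall_apply_mem fun _ ↦ isBounded_Ioo 0 1)
    (volume_setOf_forall_apply_mem_ne_zero (fun _ ↦ isOpen_Ioo) fun _ ↦ nonempty_Ioo.2 zero_lt_one)
    (by positivity) (by positivity) (by rw [finrank_euclideanSpace_fin]; ring)
  exact ⟨c₁, c₂, hc₁, hc₂, fun u hu _ ↦
    ⟨(hE u hu).1, (hE u hu).2.trans (mul_le_mul_right le_self_add _)⟩⟩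

end
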